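/- arXiv:1202.0667 — 2 statements merged into one kernel-verified Lean document; each statement's English description precedes it below -/
import Mathlib

section
/- Let G be a finite simple graph whose vertex set is partitioned into four independent sets A, B, C, D. Suppose that (i) there exists a function h₁ : C → ℤ₁₂ such that every vertex u ∈ A ∪ B having at least one neighbor in C satisfies Σ_{x ∈ N(u) ∩ C} h₁(x) ≠ 0 in ℤ₁₂; (ii) there exists a function h₂ : D → ℤ₁₃ such that every vertex u ∈ A ∪ B ∪ C having at least one neighbor in D satisfies Σ_{x ∈ N(u) ∩ D} h₂(x) ≠ 0 in ℤ₁₃; and (iii) the bipartite subgraph of G induced on A ∪ B admits an orientation of its edges in which every vertex has indegree at most 2. Then η(G) ≤ 468. -/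
/-- The sum of the values of `f` over the neighborhood of `u` in `G`. -/
noncomputable def nsum {V : Type*} [Fintype V] {M : Type*} [AddCommMonoid M]
    (G : SimpleGraph V) (f : V → M) (u : V) : M :=
  letI := Classical.decRel G.Adj
  ∑ x ∈ G.neighborFinset u, f x

/-- `G` has an additive coloring using the labels `{1, 2, …, k}`. -/
def HasAddColoring {V : Type*} [Fintype V] (G : SimpleGraph V) (k : ℕ) : Prop :=
  ∃ f : V → ℕ, (∀ v, f v ∈ Finset.Icc 1 k) ∧
    ∀ ⦃u v : V⦄, G.Adj u v → nsum G f u ≠ nsum G f v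

/-- `η(G)`: the least `k` such that `G` has an additive coloring with labels `{1, …, k}`. -/
noncomputable def eta {V : Type*} [Fintype V] (G : SimpleGraph V) : ℕ :=
  sInf {k | HasAddColoring G k}

/-!
Label `A ∪ B` with multiples of `m * n`, and, by the Chinese remainder theorem, `C` with labels
congruent to `h₁` modulo `m` and to `0` modulo `n`, and `D` with labels congruent to `0` modulo `m`
and to `h₂` modulo `n`. Modulo `n` a neighborhood sum then sees only the neighbors in `D`, and
modulo `m` only those in `C`, so `h₂` and `h₁` separate the ends of every edge meeting `D` or `C`.

For the edges between `A` and `B`, give the labels on `A` a negative sign: the difference of the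
sums at the ends of an edge becomes a constant plus a sum of variables, one of which is the head of
the edge. In the product of these linear forms over all edges, the monomial whose exponent at each
vertex is its indegree is of top degree, and its coefficient counts choices of one variable per
factor, hence is positive. By the combinatorial Nullstellensatz, `d + 1` available labels per vertex
suffice when all indegrees are at most `d`.
-/

open Finset

section LinearForms

open MvPolynomial

variable {σ ι R : Type*} [Fintype ι]

section CommSemiring

variable [CommSemiring R]

theorem coeff_prod_C_add_eq_coeff_prod {L : ι → MvPolynomial σ R}
    (hL : ∀ i, (L i).IsHomogeneous 1) (c : ι → R) {t : σ →₀ ℕ} (ht : t.degree = Fintype.card ι) :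
    coeff t (∏ i, (C (c i) + L i)) = coeff t (∏ i, L i) := by
  classical
  rw [Fintype.prod_add, coeff_sum, Fintype.sum_eq_single ∅]
  · simp
  · intro s hs
    have hhom := (IsHomogeneous.prod sᶜ L (fun _ => 1) fun i _ => hL i).C_mul (∏ i ∈ s, c i)
    rw [map_prod] at hhom
    refine hhom.coeff_eq_zero ?_
    have hcard := s.card_add_card_compl
    have hpos := card_pos.2 (nonempty_iff_ne_empty.2 hs)
    simp only [sum_const, smul_eq_mul, mul_one]
    omega

theorem totalDegree_prod_C_add_le {L : ι → MvPolynomial σ R}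
    (hL : ∀ i, (L i).IsHomogeneous 1) (c : ι → R) :
    (∏ i, (C (c i) + L i)).totalDegree ≤ Fintype.card ι := by
  refine (totalDegree_finsetProd _ _).trans ?_
  refine (sum_le_card_nsmul univ _ 1 fun i _ => ?_).trans_eq (by simp)
  refine (totalDegree_add _ _).trans (max_le ?_ (hL i).totalDegree_le)
  simp

theorem coeff_prod_sum_X [DecidableEq σ] [DecidableEq ι] (T : ι → Finset σ) (t : σ →₀ ℕ) :
    coeff t (∏ i, ∑ x ∈ T i, (X x : MvPolynomial σ R)) =
      #{p ∈ Fintype.piFinset T | ∑ i, Finsupp.single (p i) 1 = t} := by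
  simp only [prod_univ_sum, X, ← monomial_sum_one, coeff_sum, coeff_monomial, sum_boole]

end CommSemiring

theorem exists_forall_add_sum_ne_zero [Finite σ] [DecidableEq σ] [CommRing R] [IsDomain R]
    [CharZero R] (c : ι → R) {T : ι → Finset σ} {r : ι → σ} (hr : ∀ i, r i ∈ T i)
    {S : σ → Finset R} (hS : ∀ x, #{i | r i = x} < #(S x)) :
    ∃ s : σ → R, (∀ x, s x ∈ S x) ∧ ∀ i, c i + ∑ x ∈ T i, s x ≠ 0 := by
  classical
  set P : MvPolynomial σ R := ∏ i, (C (c i) + ∑ x ∈ T i, X x)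
  set t : σ →₀ ℕ := ∑ i, Finsupp.single (r i) 1
  have hhom (i : ι) : (∑ x ∈ T i, (X x : MvPolynomial σ R)).IsHomogeneous 1 :=
    .sum _ _ _ fun x _ => isHomogeneous_X R x
  have hdeg : t.degree = Fintype.card ι := by simp [t]
  have hcoeff : coeff t P ≠ 0 := by
    rw [coeff_prod_C_add_eq_coeff_prod hhom c hdeg, coeff_prod_sum_X, Nat.cast_ne_zero]
    exact card_ne_zero_of_mem (mem_filter.2 ⟨Fintype.mem_piFinset.2 hr, rfl⟩)
  have htotal : P.totalDegree = t.degree :=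
    ((totalDegree_prod_C_add_le hhom c).trans_eq hdeg.symm).antisymm
      (le_totalDegree (mem_support_iff.2 hcoeff))
  have ht (x : σ) : t x = #{i | r i = x} := by
    simp [t, Finsupp.finsetSum_apply, Finsupp.single_apply]
  obtain ⟨s, hsS, hs⟩ := combinatorial_nullstellensatz_exists_eval_nonzero P t hcoeff htotal S
    fun x => (ht x).trans_lt (hS x)
  rw [map_prod, prod_ne_zero_iff] at hs
  exact ⟨s, hsS, fun i => by simpa using hs i (mem_univ i)⟩

end LinearForms

section NeighborhoodSums

variable {V : Type*} [Fintype V] {G : SimpleGraph V}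

theorem nsum_eq_sum_neighborFinset {M : Type*} [AddCommMonoid M] [DecidableRel G.Adj]
    (f : V → M) (u : V) : nsum G f u = ∑ x ∈ G.neighborFinset u, f x := by
  unfold nsum
  congr!

theorem natCast_nsum {R : Type*} [NonAssocSemiring R] (f : V → ℕ) (u : V) :
    ((nsum G f u : ℕ) : R) = nsum G (fun x => (f x : R)) u := by
  simp [nsum]

theorem nsum_ne_nsum_of_mem_indep [DecidableEq V] [DecidableRel G.Adj] {R : Type*}
    [NonAssocSemiring R] {C : Finset V} (hind : ∀ u ∈ C, ∀ v ∈ C, ¬G.Adj u v) {f : V → ℕ}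
    {h : V → R} (hf : ∀ x, (f x : R) = if x ∈ C then h x else 0)
    {u v : V} (hv : v ∈ C) (hu : ∑ x ∈ (G.neighborFinset u).filter (· ∈ C), h x ≠ 0) :
    nsum G f u ≠ nsum G f v := by
  have hres (w : V) : ((nsum G f w : ℕ) : R) =
      ∑ x ∈ (G.neighborFinset w).filter (· ∈ C), h x := by
    rw [natCast_nsum, nsum_eq_sum_neighborFinset, sum_filter]
    simp only [hf]
  have hempty : (G.neighborFinset v).filter (· ∈ C) = ∅ :=
    filter_false_of_mem fun x hx hxC => hind v hv x hxC ((G.mem_neighborFinset v x).1 hx)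
  intro heq
  have h0 := congrArg (Nat.cast : ℕ → R) heq
  rw [hres, hres, hempty, sum_empty] at h0
  exact hu h0

end NeighborhoodSums

section Orientations

variable {V : Type*} [Fintype V] [DecidableEq V]

theorem card_filter_head_eq {G : SimpleGraph V} [DecidableRel G.Adj] {ori : Sym2 V → V}
    (hori : ∀ e ∈ G.edgeSet, ori e ∈ e) (v : V) :
    #{e : G.edgeSet | ori e = v} = #{u ∈ G.neighborFinset v | ori s(u, v) = v} := by
  symm
  refine card_bij (fun u hu => ⟨s(u, v), ?_⟩) ?_ ?_ ?_
  · simpa [G.adj_comm] using (mem_filter.1 hu).1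
  · simp
  · exact fun _ _ _ _ h => Sym2.congr_left.1 (Subtype.ext_iff.1 h)
  · rintro ⟨e, he⟩ hev
    have hhead : ori e = v := by simpa using hev
    obtain ⟨u, rfl⟩ := hhead ▸ hori e he
    rw [Sym2.eq_swap] at he hhead
    exact ⟨u, by simpa [hhead] using he.symm, Subtype.ext Sym2.eq_swap⟩

theorem exists_list_labeling_of_isBipartiteWith {R : Type*} [CommRing R] [IsDomain R] [CharZero R]
    {H : SimpleGraph V} [DecidableRel H.Adj] {A B : Set V} (hH : H.IsBipartiteWith A B)
    {ori : Sym2 V → V} (hori : ∀ e ∈ H.edgeSet, ori e ∈ e) (κ : V → R) {S : V → Finset R}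
    (hS : ∀ v, #{u ∈ H.neighborFinset v | ori s(u, v) = v} < #(S v)) :
    ∃ f : V → R, (∀ v, f v ∈ S v) ∧
      ∀ u v, H.Adj u v → κ u + nsum H f u ≠ κ v + nsum H f v := by
  classical
  have hnotMem {x : V} (hx : x ∈ A) : x ∉ B := Set.disjoint_left.1 hH.disjoint hx
  let ε : V → R := fun v => if v ∈ A then -1 else 1
  have hε_mul_self (v : V) : ε v * ε v = 1 := by grind
  have hε_adj {u v : V} (h : H.Adj u v) : ε v = -ε u := by grind [hH.mem_of_adj h]
  have hdisj {u v : V} (h : H.Adj u v) : Disjoint (H.neighborFinset u) (H.neighborFinset v) := by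
    simp only [disjoint_left, SimpleGraph.mem_neighborFinset]
    intro x hux hvx
    grind [hH.mem_of_adj h, hH.mem_of_adj hux, hH.mem_of_adj hvx]
  let T : H.edgeSet → Finset V := fun e => e.1.toFinset.biUnion fun w => H.neighborFinset w
  have hT (e : H.edgeSet) : ori e ∈ T e := by
    obtain ⟨e, he⟩ := e
    obtain ⟨w, hw⟩ := hori e he
    have hadj : H.Adj (ori e) w := by rwa [hw] at he
    exact mem_biUnion.2 ⟨w, Sym2.mem_toFinset.2 (Sym2.mem_iff_mem.1 ⟨_, hw.trans Sym2.eq_swap⟩),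
      (H.mem_neighborFinset w _).2 hadj.symm⟩
  obtain ⟨s, hsS, hs⟩ := exists_forall_add_sum_ne_zero
    (fun e : H.edgeSet => -∑ y ∈ e.1.toFinset, ε y * κ y) hT (S := fun v => (S v).image (ε v * ·))
    fun v => by
      rw [card_filter_head_eq hori, card_image_of_injective _ (mul_right_injective₀ _)]
      · exact hS v
      · exact left_ne_zero_of_mul_eq_one (hε_mul_self v)
  refine ⟨fun v => ε v * s v, fun v => ?_, fun u v hadj heq => hs ⟨s(u, v), hadj⟩ ?_⟩
  · obtain ⟨a, ha, hav⟩ := mem_image.1 (hsS v)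
    simpa [← hav, ← mul_assoc, hε_mul_self] using ha
  · have hnsum (w : V) :
        nsum H (fun x => ε x * s x) w = -ε w * ∑ x ∈ H.neighborFinset w, s x := by
      rw [nsum_eq_sum_neighborFinset, mul_sum]
      exact sum_congr rfl fun x hx => by rw [hε_adj ((H.mem_neighborFinset w x).1 hx)]
    simp only [hnsum, hε_adj hadj] at heq
    simp only [T, Sym2.toFinset_mk_eq, sum_pair hadj.ne, biUnion_insert, singleton_biUnion,
      sum_union (hdisj hadj), hε_adj hadj]
    linear_combination -ε u * heq - (∑ x ∈ H.neighborFinset u, s x +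
      ∑ x ∈ H.neighborFinset v, s x) * hε_mul_self u

theorem exists_extension_distinguishing_bipartite_edges {G : SimpleGraph V} [DecidableRel G.Adj]
    {A B : Finset V} (hAB : Disjoint A B) (hindA : ∀ u ∈ A, ∀ v ∈ A, ¬G.Adj u v)
    (hindB : ∀ u ∈ B, ∀ v ∈ B, ¬G.Adj u v)
    {ori : Sym2 V → V} (hori : ∀ e ∈ G.edgeSet, ori e ∈ e) (g : V → ℕ) {S : V → Finset ℕ}
    (hS : ∀ v ∈ A ∪ B, #{u ∈ G.neighborFinset v | u ∈ A ∪ B ∧ ori s(u, v) = v} < #(S v)) :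
    ∃ f : V → ℕ, (∀ v ∈ A ∪ B, f v ∈ S v) ∧ (∀ v ∉ A ∪ B, f v = g v) ∧
      ∀ u ∈ A, ∀ v ∈ B, G.Adj u v → nsum G f u ≠ nsum G f v := by
  classical
  let H : SimpleGraph V := G.between A B
  have hH : H.IsBipartiteWith A B := SimpleGraph.between_isBipartiteWith (disjoint_coe.2 hAB)
  have hoff {v : V} (hv : v ∉ A ∪ B) : H.neighborFinset v = ∅ := by
    ext x
    simp only [H, SimpleGraph.mem_neighborFinset, SimpleGraph.between_adj, mem_coe]
    grind
  have hon {v : V} (hv : v ∈ A ∪ B) :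
      H.neighborFinset v = {x ∈ G.neighborFinset v | x ∈ A ∪ B} := by
    ext x
    simp only [H, SimpleGraph.mem_neighborFinset, SimpleGraph.between_adj, mem_coe, mem_filter]
    grind
  let S' : V → Finset ℕ := fun v => if v ∈ A ∪ B then S v else {g v}
  let κ : V → ℕ := fun v => ∑ x ∈ G.neighborFinset v with x ∉ A ∪ B, g x
  obtain ⟨s, hsS, hs⟩ := exists_list_labeling_of_isBipartiteWith (R := ℤ) hH
    (fun e he => hori e (SimpleGraph.edgeSet_mono SimpleGraph.between_le he))
    (fun v => (κ v : ℤ)) (S := fun v => (S' v).map Nat.castEmbedding) fun v => by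
      by_cases hv : v ∈ A ∪ B
      · simpa only [card_map, S', if_pos hv, hon hv, filter_filter] using hS v hv
      · simp only [card_map, S', if_neg hv, hoff hv, filter_empty, card_empty, card_singleton,
          zero_lt_one]
  simp only [mem_map, Nat.castEmbedding_apply] at hsS
  choose f hfS hfs using hsS
  obtain rfl : (fun v => (f v : ℤ)) = s := funext hfs
  have hfg {v : V} (hv : v ∉ A ∪ B) : f v = g v :=
    mem_singleton.1 (by simpa only [S', if_neg hv] using hfS v)
  have hsplit {v : V} (hv : v ∈ A ∪ B) : nsum G f v = κ v + nsum H f v := by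
    rw [nsum_eq_sum_neighborFinset, nsum_eq_sum_neighborFinset, hon hv,
      ← sum_filter_not_add_sum_filter _ (· ∈ A ∪ B)]
    exact congrArg (· + _) (sum_congr rfl fun x hx => hfg (mem_filter.1 hx).2)
  refine ⟨f, fun v hv => by simpa only [S', if_pos hv] using hfS v, fun v => hfg, ?_⟩
  intro u hu v hv hadj
  rw [hsplit (mem_union_left B hu), hsplit (mem_union_right A hv)]
  have hne := hs u v ⟨hadj, .inl ⟨hu, hv⟩⟩
  simp only [← natCast_nsum] at hne
  exact_mod_cast hne

end Orientations

theorem exists_mem_Icc_natCast_eq_and_natCast_eq {m n : ℕ} [NeZero m] [NeZero n]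
    (hmn : m.Coprime n) (a : ZMod m) (b : ZMod n) :
    ∃ k ∈ Icc 1 (m * n), (k : ZMod m) = a ∧ (k : ZMod n) = b := by
  let z : ZMod (m * n) := (ZMod.chineseRemainder hmn).symm (a, b)
  -- `z.val` itself may be `0`, which is not allowed as a label.
  refine ⟨(z - 1).val + 1, mem_Icc.2 ⟨Nat.succ_pos _, ZMod.val_lt (z - 1)⟩, ?_⟩
  have hz : (((z - 1).val + 1 : ℕ) : ZMod (m * n)) = z := by simp
  have hcrt := congrArg (ZMod.chineseRemainder hmn) hz
  rw [map_natCast, RingEquiv.apply_symm_apply] at hcrt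
  exact Prod.ext_iff.1 hcrt

theorem forall_adj_ne_of_ordered_parts {V α : Type*} [Fintype V] [DecidableEq V]
    {G : SimpleGraph V} {A B C D : Finset V} (hcover : A ∪ B ∪ C ∪ D = univ)
    (hindA : ∀ u ∈ A, ∀ v ∈ A, ¬G.Adj u v) (hindB : ∀ u ∈ B, ∀ v ∈ B, ¬G.Adj u v)
    (hindC : ∀ u ∈ C, ∀ v ∈ C, ¬G.Adj u v) (hindD : ∀ u ∈ D, ∀ v ∈ D, ¬G.Adj u v)
    {σ : V → α} (hB : ∀ u ∈ A, ∀ v ∈ B, G.Adj u v → σ u ≠ σ v)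
    (hC : ∀ u ∈ A ∪ B, ∀ v ∈ C, G.Adj u v → σ u ≠ σ v)
    (hD : ∀ u ∈ A ∪ B ∪ C, ∀ v ∈ D, G.Adj u v → σ u ≠ σ v) ⦃u v : V⦄ (hadj : G.Adj u v) :
    σ u ≠ σ v := by
  have hmem (x : V) : x ∈ A ∨ x ∈ B ∨ x ∈ C ∨ x ∈ D := by
    have hx : x ∈ A ∪ B ∪ C ∪ D := hcover ▸ mem_univ x
    simpa only [mem_union, or_assoc] using hx
  simp only [mem_union] at hC hD
  have hadj' := hadj.symm
  grind

theorem additive_coloring_four_parts_general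
    {V : Type*} [Fintype V] [DecidableEq V] (G : SimpleGraph V) [DecidableRel G.Adj]
    {m n d : ℕ} [NeZero m] [NeZero n] (hmn : m.Coprime n)
    (A B C D : Finset V)
    (hcover : A ∪ B ∪ C ∪ D = Finset.univ)
    (hAB : Disjoint A B) (hAC : Disjoint A C) (hAD : Disjoint A D)
    (hBC : Disjoint B C) (hBD : Disjoint B D)
    (hindA : ∀ u ∈ A, ∀ v ∈ A, ¬G.Adj u v)
    (hindB : ∀ u ∈ B, ∀ v ∈ B, ¬G.Adj u v)
    (hindC : ∀ u ∈ C, ∀ v ∈ C, ¬G.Adj u v)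
    (hindD : ∀ u ∈ D, ∀ v ∈ D, ¬G.Adj u v)
    (hh1 : ∃ h₁ : V → ZMod m, ∀ u ∈ A ∪ B, (∃ x ∈ C, G.Adj u x) →
      ∑ x ∈ (G.neighborFinset u).filter (· ∈ C), h₁ x ≠ 0)
    (hh2 : ∃ h₂ : V → ZMod n, ∀ u ∈ A ∪ B ∪ C, (∃ x ∈ D, G.Adj u x) →
      ∑ x ∈ (G.neighborFinset u).filter (· ∈ D), h₂ x ≠ 0)
    (hor : ∃ ori : Sym2 V → V, (∀ e ∈ G.edgeSet, ori e ∈ e) ∧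
      ∀ v ∈ A ∪ B,
        ((G.neighborFinset v).filter fun u => u ∈ A ∪ B ∧ ori s(u, v) = v).card ≤ d) :
    HasAddColoring G ((d + 1) * (m * n)) := by
  obtain ⟨h₁, hh1⟩ := hh1
  obtain ⟨h₂, hh2⟩ := hh2
  obtain ⟨ori, hori, hindeg⟩ := hor
  choose g hg hgm hgn using fun v => exists_mem_Icc_natCast_eq_and_natCast_eq hmn
    (if v ∈ C then h₁ v else 0) (if v ∈ D then h₂ v else 0)
  have hmn_pos : 0 < m * n := NeZero.pos (m * n)
  obtain ⟨f, hfS, hfg, hfAB⟩ := exists_extension_distinguishing_bipartite_edges hAB hindA hindB hori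
    g (S := fun _ => (Icc 1 (d + 1)).image (· * (m * n))) fun v hv => by
      rw [card_image_of_injective _ (mul_left_injective₀ hmn_pos.ne'), Nat.card_Icc]
      exact Nat.lt_succ_of_le (hindeg v hv)
  simp only [mem_image, mem_Icc] at hfS
  have hrange (v : V) : f v ∈ Icc 1 ((d + 1) * (m * n)) := by
    by_cases hv : v ∈ A ∪ B
    · obtain ⟨i, ⟨hi, hid⟩, hiv⟩ := hfS v hv
      exact hiv ▸ mem_Icc.2 ⟨Nat.mul_pos hi hmn_pos, Nat.mul_le_mul_right _ hid⟩
    · exact hfg v hv ▸ Icc_subset_Icc_right (Nat.le_mul_of_pos_left _ d.succ_pos) (hg v)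
  have hfm (v : V) : (f v : ZMod m) = if v ∈ C then h₁ v else 0 := by
    by_cases hv : v ∈ A ∪ B
    · obtain ⟨i, -, hiv⟩ := hfS v hv
      simp [← hiv, disjoint_left.1 (disjoint_union_left.2 ⟨hAC, hBC⟩) hv]
    · rw [hfg v hv, hgm]
  have hfn (v : V) : (f v : ZMod n) = if v ∈ D then h₂ v else 0 := by
    by_cases hv : v ∈ A ∪ B
    · obtain ⟨i, -, hiv⟩ := hfS v hv
      simp [← hiv, disjoint_left.1 (disjoint_union_left.2 ⟨hAD, hBD⟩) hv]
    · rw [hfg v hv, hgn]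
  exact ⟨f, hrange, forall_adj_ne_of_ordered_parts hcover hindA hindB hindC hindD hfAB
    (fun u hu v hv h => nsum_ne_nsum_of_mem_indep hindC hfm hv (hh1 u hu ⟨v, hv, h⟩))
    fun u hu v hv h => nsum_ne_nsum_of_mem_indep hindD hfn hv (hh2 u hu ⟨v, hv, h⟩)⟩

/-- Let the vertex set of a finite simple graph `G` be partitioned into four
independent sets `A`, `B`, `C`, `D`. Suppose (i) there is `h₁ : C → ℤ₁₂` such that
every vertex of `A ∪ B` with a neighbor in `C` has neighborhood sum over `C` nonzero
in `ℤ₁₂`; (ii) there is `h₂ : D → ℤ₁₃` such that every vertex of `A ∪ B ∪ C` with a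
neighbor in `D` has neighborhood sum over `D` nonzero in `ℤ₁₃`; and (iii) the
bipartite subgraph of `G` induced on `A ∪ B` has an orientation with all indegrees
at most `2`. Then `η(G) ≤ 468`. -/
theorem additive_coloring_four_parts
    {V : Type*} [Fintype V] [DecidableEq V] (G : SimpleGraph V) [DecidableRel G.Adj]
    (A B C D : Finset V)
    (hcover : A ∪ B ∪ C ∪ D = Finset.univ)
    (hAB : Disjoint A B) (hAC : Disjoint A C) (hAD : Disjoint A D)
    (hBC : Disjoint B C) (hBD : Disjoint B D) (hCD : Disjoint C D)
    (hindA : ∀ u ∈ A, ∀ v ∈ A, ¬G.Adj u v)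
    (hindB : ∀ u ∈ B, ∀ v ∈ B, ¬G.Adj u v)
    (hindC : ∀ u ∈ C, ∀ v ∈ C, ¬G.Adj u v)
    (hindD : ∀ u ∈ D, ∀ v ∈ D, ¬G.Adj u v)
    (hh1 : ∃ h₁ : V → ZMod 12, ∀ u ∈ A ∪ B, (∃ x ∈ C, G.Adj u x) →
      ∑ x ∈ (G.neighborFinset u).filter (· ∈ C), h₁ x ≠ 0)
    (hh2 : ∃ h₂ : V → ZMod 13, ∀ u ∈ A ∪ B ∪ C, (∃ x ∈ D, G.Adj u x) →
      ∑ x ∈ (G.neighborFinset u).filter (· ∈ D), h₂ x ≠ 0)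
    (hor : ∃ ori : Sym2 V → V, (∀ e ∈ G.edgeSet, ori e ∈ e) ∧
      ∀ v ∈ A ∪ B,
        ((G.neighborFinset v).filter fun u => u ∈ A ∪ B ∧ ori s(u, v) = v).card ≤ 2) :
    eta G ≤ 468 :=
  Nat.sInf_le (additive_coloring_four_parts_general G (m := 12) (n := 13) (d := 2) (by decide)
    A B C D hcover hAB hAC hAD hBC hBD hindA hindB hindC hindD hh1 hh2 hor)
end

section
/- Let G be a finite simple graph whose vertex set can be partitioned as V(G) = I ∪ F, where I is two-independent (the distance in G between any two distinct vertices of I is at least three) and the subgraph of G induced on F is a forest (contains no cycle). Then η(G) ≤ 4. -/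
/-!
Color `I` with `1` and `F` with labels from `{2, 4}`. Modulo `2` only the neighbors in `I` count:
a vertex of `I` has none and each of its neighbors has exactly one, so edges meeting `I` are
never in conflict.

On the forest, where the contribution of `I` to the sums is a fixed offset, let each vertex be
responsible for the edge to its parent. Flipping the sign of the labels on one side of the
bipartition turns the difference of the neighborhood sums at the two ends of that edge into their
sum. Each edge then asks that one coordinate of `A *ᵥ z` avoid one value, where `z` is the vector
of flipped labels and `A` has nonnegative entries and positive diagonal. The permanent of `A` is
positive, so Alon's permanent lemma, a consequence of the combinatorial Nullstellensatz, gives such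
a `z` with entries in any prescribed sets of two elements.
-/

open scoped Matrix

section PermanentLemma

open MvPolynomial

variable {n R : Type*} [Fintype n]

lemma coeff_prod_sub_C_of_degree_eq_card {ι σ : Type*} [CommRing R] {p : ι → MvPolynomial σ R}
    {s : Finset ι} (hp : ∀ i ∈ s, (p i).totalDegree ≤ 1) (c : ι → R) {m : σ →₀ ℕ}
    (hm : m.degree = s.card) :
    coeff m (∏ i ∈ s, (p i - C (c i))) = coeff m (∏ i ∈ s, p i) := by
  classical
  rw [Finset.prod_sub, coeff_sum, Finset.sum_eq_single_of_mem ∅ (Finset.empty_mem_powerset s)]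
  · simp only [Finset.card_empty, pow_zero, one_mul, Finset.sdiff_empty, Finset.prod_empty, mul_one]
  intro t hts ht
  rw [Finset.mem_powerset] at hts
  have hdeg : (∏ i ∈ s \ t, p i).totalDegree < m.degree := calc
    _ ≤ ∑ i ∈ s \ t, (p i).totalDegree := totalDegree_finsetProd _ _
    _ ≤ (s \ t).card := by
      simpa using Finset.sum_le_card_nsmul _ _ 1 fun i hi ↦ hp i (Finset.sdiff_subset hi)
    _ < s.card := Finset.card_lt_card
      (Finset.sdiff_ssubset hts (Finset.nonempty_iff_ne_empty.mpr ht))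
    _ = m.degree := hm.symm
  have hterm : (-1) ^ t.card * (∏ i ∈ s \ t, p i) * ∏ i ∈ t, C (c i) =
      C ((-1) ^ t.card * ∏ i ∈ t, c i) * ∏ i ∈ s \ t, p i := by
    simp only [map_mul, map_pow, map_neg, map_one, map_prod]
    ring
  rw [hterm, coeff_C_mul, coeff_eq_zero_of_totalDegree_lt (by rwa [← Finsupp.degree_apply]),
    mul_zero]

lemma surjective_of_sum_single_eq {ι : Type*} [Fintype ι] {f : ι → n}
    (hf : ∑ i, Finsupp.single (f i) 1 = (∑ j, Finsupp.single j 1 : n →₀ ℕ)) :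
    Function.Surjective f := by
  classical
  intro j
  by_contra! hj
  simpa [Finsupp.finsetSum_apply, Finsupp.single_apply, hj] using DFunLike.congr_fun hf j

variable [DecidableEq n]

lemma coeff_prod_toMvPolynomial [CommSemiring R] (A : Matrix n n R) :
    coeff (∑ i, Finsupp.single i 1) (∏ i, A.toMvPolynomial i) = A.permanent := by
  simp only [Matrix.toMvPolynomial, Finset.prod_univ_sum, Fintype.piFinset_univ,
    ← monomial_sum_prod, coeff_sum, coeff_monomial]
  rw [← Matrix.permanent_transpose, Matrix.permanent]
  refine (Fintype.sum_of_injective (fun σ : Equiv.Perm n ↦ ⇑σ) DFunLike.coe_injective _ _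
    (fun f hf ↦ if_neg fun h ↦ hf ?_) fun σ ↦ ?_).symm
  · have hbij := Finite.surjective_iff_bijective.mp (surjective_of_sum_single_eq h)
    exact ⟨Equiv.ofBijective f hbij, rfl⟩
  · rw [if_pos (Equiv.sum_comp σ fun i ↦ Finsupp.single i 1)]
    rfl

lemma exists_forall_mulVec_ne_of_permanent_ne_zero [CommRing R] [IsDomain R] {A : Matrix n n R}
    (hA : A.permanent ≠ 0) (c : n → R) {L : n → Finset R} (hL : ∀ i, 1 < (L i).card) :
    ∃ z : n → R, (∀ i, z i ∈ L i) ∧ ∀ i, (A *ᵥ z) i ≠ c i := by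
  set m : n →₀ ℕ := ∑ i, Finsupp.single i 1 with hm
  set P : MvPolynomial n R := ∏ i, (A.toMvPolynomial i - C (c i)) with hP
  have hm_apply (i : n) : m i = 1 := by
    simp [hm, Finsupp.finsetSum_apply, Finsupp.single_apply]
  have hm_degree : m.degree = (Finset.univ : Finset n).card := by simp [hm, map_sum]
  have hcoeff : coeff m P ≠ 0 := by
    rwa [hP, coeff_prod_sub_C_of_degree_eq_card (fun i _ ↦ A.toMvPolynomial_totalDegree_le i) c
      hm_degree, coeff_prod_toMvPolynomial]
  have hP_degree : P.totalDegree ≤ m.degree := calc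
    _ ≤ ∑ i, (A.toMvPolynomial i - C (c i)).totalDegree := totalDegree_finsetProd _ _
    _ ≤ ∑ _ : n, 1 := by
      gcongr with i
      exact (totalDegree_sub_C_le _ _).trans (A.toMvPolynomial_totalDegree_le i)
    _ = m.degree := by rw [hm_degree, Finset.card_eq_sum_ones]
  obtain ⟨z, hzL, hz⟩ := combinatorial_nullstellensatz_exists_eval_nonzero P m hcoeff
    (hP_degree.antisymm (le_totalDegree (mem_support_iff.mpr hcoeff))) L
    fun i ↦ (hm_apply i).trans_lt (hL i)
  refine ⟨z, hzL, fun i hi ↦ hz ?_⟩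
  rw [hP, map_prod]
  refine Finset.prod_eq_zero (Finset.mem_univ i) ?_
  rw [map_sub, Matrix.toMvPolynomial_eval_eq_apply, eval_C, hi, sub_self]

lemma permanent_pos_of_nonneg_of_diag_pos [CommSemiring R] [PartialOrder R] [IsStrictOrderedRing R]
    {A : Matrix n n R} (hA : ∀ i j, 0 ≤ A i j) (hdiag : ∀ i, 0 < A i i) : 0 < A.permanent :=
  Finset.sum_pos' (fun _ _ ↦ Finset.prod_nonneg fun _ _ ↦ hA _ _)
    ⟨1, Finset.mem_univ _, Finset.prod_pos fun i _ ↦ hdiag i⟩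

end PermanentLemma

section Pseudoforest

variable {V : Type*} {G : SimpleGraph V}

/-- A pseudoforest: a graph whose edges can be oriented with all out-degrees at most one. The
function `p` sends a vertex to the head of its outgoing edge, its parent in the case of a rooted
forest; its value at a vertex without outgoing edge is arbitrary. -/
def IsPseudoforest (G : SimpleGraph V) : Prop :=
  ∃ p : V → V, ∀ ⦃a b⦄, G.Adj a b → p a = b ∨ p b = a

lemma exists_parent_of_isAcyclic (hG : G.IsAcyclic) (r : V) :
    ∃ p : V → V, ∀ ⦃a b⦄, G.Reachable a r → G.Adj a b → p a = b ∨ p b = a := by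
  classical
  choose q hq using fun (v : V) (hv : G.Reachable v r) ↦ hv.exists_isPath
  refine ⟨fun v ↦ if hv : G.Reachable v r then (q v hv).snd else v, fun a b ha hab ↦ ?_⟩
  have hb : G.Reachable b r := hab.symm.reachable.trans ha
  simp only [dif_pos ha, dif_pos hb]
  by_cases hmem : b ∈ (q a ha).support
  · exact .inl (hG.eq_snd_of_adj_start (hq a ha) hab hmem).symm
  · right
    have hcons : (SimpleGraph.Walk.cons hab.symm (q a ha)).IsPath := (hq a ha).cons hmem
    have heq := (hG.subsingleton_path b r).elim ⟨_, hcons⟩ ⟨_, hq b hb⟩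
    rw [← Subtype.mk.inj heq, SimpleGraph.Walk.snd_cons]

lemma isPseudoforest_of_isAcyclic (hG : G.IsAcyclic) : IsPseudoforest G := by
  choose p hp using exists_parent_of_isAcyclic hG
  let root (v : V) : V := (G.connectedComponentMk v).out
  have hroot (v : V) : G.Reachable v (root v) :=
    (SimpleGraph.ConnectedComponent.exact (Quot.out_eq _)).symm
  refine ⟨fun v ↦ p (root v) v, fun a b hab ↦ ?_⟩
  have hroot_eq : root b = root a :=
    congrArg Quot.out (SimpleGraph.ConnectedComponent.sound hab.symm.reachable)
  simp only [hroot_eq]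
  exact hp (root a) (hroot a) hab

lemma exists_sign_of_isBipartite (hG : G.IsBipartite) :
    ∃ s : V → ℤˣ, ∀ ⦃a b⦄, G.Adj a b → s b = -s a := by
  obtain ⟨col⟩ := hG
  refine ⟨fun v ↦ if col v = 0 then 1 else -1, fun a b hab ↦ ?_⟩
  have hcol : col a ≠ col b := col.valid hab
  dsimp only
  split_ifs <;> first | rfl | omega

end Pseudoforest

section NeighborSum

variable {V : Type*} [Fintype V] {G : SimpleGraph V}

lemma nsum_eq_sum_ite {M : Type*} [AddCommMonoid M] [DecidableRel G.Adj] (f : V → M) (u : V) :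
    nsum G f u = ∑ x, if G.Adj u x then f x else 0 := by
  rw [nsum, ← Finset.sum_filter]
  congr! 1
  ext x
  simp

lemma nsum_extend {M : Type*} [AddCommMonoid M] (s : Set V) [DecidablePred (· ∈ s)] (g : s → M)
    (h : V → M) (v : s) :
    nsum G (Function.extend Subtype.val g h) v =
      nsum (G.induce s) g v + nsum G (sᶜ.indicator h) v := by
  classical
  simp only [nsum_eq_sum_ite]
  have hmem (x : s) : Function.extend Subtype.val g h x = g x :=
    Subtype.val_injective.extend_apply g h x
  have hnotMem (x : { x // x ∉ s }) : Function.extend Subtype.val g h x = h x :=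
    Function.extend_apply' g h _ fun ⟨y, hy⟩ ↦ x.2 (hy ▸ y.2)
  have hind (x : s) : sᶜ.indicator h x = 0 := Set.indicator_of_notMem (by simp) h
  have hind' (x : { x // x ∉ s }) : sᶜ.indicator h x = h x := Set.indicator_of_mem x.2 h
  rw [← Fintype.sum_subtype_add_sum_subtype (· ∈ s),
    ← Fintype.sum_subtype_add_sum_subtype (· ∈ s) fun x ↦ if G.Adj v x then sᶜ.indicator h x else 0]
  simp only [hmem, hnotMem, hind, hind', SimpleGraph.comap_adj, Function.Embedding.subtype_apply,
    ite_self, Finset.sum_const_zero, zero_add]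

lemma nsum_modEq {m : ℕ} {f g : V → ℕ} (hfg : ∀ x, f x ≡ g x [MOD m]) (u : V) :
    nsum G f u ≡ nsum G g u [MOD m] :=
  Nat.ModEq.sum fun x _ ↦ hfg x

lemma nsum_sign_smul {M : Type*} [AddCommGroup M] {s : V → ℤˣ}
    (hs : ∀ ⦃a b⦄, G.Adj a b → s b = -s a) (f : V → M) (u : V) :
    nsum G (fun x ↦ s x • f x) u = -s u • nsum G f u := by
  rw [nsum, nsum, Finset.smul_sum]
  refine Finset.sum_congr rfl fun x hx ↦ ?_
  rw [hs (by simpa using hx)]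

end NeighborSum

section PseudoforestLabeling

variable {V : Type*} {G : SimpleGraph V}

open Classical in
/-- The matrix whose row at `v` adds up the two neighborhood sums at the ends of the edge from `v`
to `p v`. If that edge is missing, the row is that of the identity matrix, which keeps the diagonal
positive. -/
noncomputable def edgeSumMatrix (G : SimpleGraph V) (p : V → V) (R : Type*) [Semiring R] :
    Matrix V V R :=
  fun v ↦ if G.Adj v (p v) then G.adjMatrix R v + G.adjMatrix R (p v) else Pi.single v 1

lemma edgeSumMatrix_mulVec_of_adj [Fintype V] {R : Type*} [Semiring R] {p : V → V} {v : V}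
    (hv : G.Adj v (p v)) (z : V → R) :
    (edgeSumMatrix G p R *ᵥ z) v = nsum G z v + nsum G z (p v) := by
  classical
  rw [Matrix.mulVec, edgeSumMatrix, if_pos hv, add_dotProduct]
  simp only [SimpleGraph.adjMatrix_dotProduct]
  rfl

section Order

variable {R : Type*} [Semiring R] [PartialOrder R] [IsStrictOrderedRing R]

lemma edgeSumMatrix_nonneg (p : V → V) (i j : V) : 0 ≤ edgeSumMatrix G p R i j := by
  classical
  rw [edgeSumMatrix]
  split_ifs
  · simp only [Pi.add_apply, SimpleGraph.adjMatrix_apply]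
    positivity
  · rw [Pi.single_apply]
    positivity

lemma edgeSumMatrix_diag_pos (p : V → V) (i : V) : 0 < edgeSumMatrix G p R i i := by
  classical
  rw [edgeSumMatrix]
  split_ifs with hi
  · simp [hi.symm]
  · simp

end Order

variable [Fintype V]

lemma exists_forall_nsum_add_ne {R : Type*} [CommRing R] [IsDomain R] [PartialOrder R]
    [IsStrictOrderedRing R] (hbip : G.IsBipartite) (hG : IsPseudoforest G) (c : V → R)
    {L : V → Finset R} (hL : ∀ v, 1 < (L v).card) :
    ∃ f : V → R, (∀ v, f v ∈ L v) ∧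
      ∀ ⦃a b⦄, G.Adj a b → nsum G f a + c a ≠ nsum G f b + c b := by
  classical
  obtain ⟨p, hp⟩ := hG
  obtain ⟨s, hs⟩ := exists_sign_of_isBipartite hbip
  obtain ⟨z, hzL, hz⟩ := exists_forall_mulVec_ne_of_permanent_ne_zero
    (permanent_pos_of_nonneg_of_diag_pos (edgeSumMatrix_nonneg (G := G) p)
      (edgeSumMatrix_diag_pos p)).ne'
    (fun v ↦ s v • (c v - c (p v))) (L := fun v ↦ (L v).image (s v • ·))
    (fun v ↦ by rw [Finset.card_image_of_injective _ (MulAction.injective (s v))]; exact hL v)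
  have hparent ⦃a : V⦄ (ha : G.Adj a (p a)) :
      nsum G (fun x ↦ s x • z x) a + c a ≠ nsum G (fun x ↦ s x • z x) (p a) + c (p a) := by
    intro heq
    refine hz a ?_
    rw [nsum_sign_smul hs, nsum_sign_smul hs, hs ha, neg_neg, Units.neg_smul] at heq
    have hdiff : c a - c (p a) = s a • (nsum G z a + nsum G z (p a)) := by
      rw [smul_add]
      linear_combination heq
    rw [edgeSumMatrix_mulVec_of_adj ha, hdiff, smul_smul, Int.units_mul_self, one_smul]
  refine ⟨fun v ↦ s v • z v, fun v ↦ ?_, fun a b hab ↦ ?_⟩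
  · obtain ⟨y, hy, hyz⟩ := Finset.mem_image.mp (hzL v)
    simpa only [← hyz, smul_smul, Int.units_mul_self, one_smul] using hy
  · rcases hp hab with rfl | rfl
    · exact hparent hab
    · exact (hparent hab.symm).symm

lemma exists_forall_nsum_add_ne_nat (hbip : G.IsBipartite) (hG : IsPseudoforest G) (c : V → ℕ)
    {L : V → Finset ℕ} (hL : ∀ v, 1 < (L v).card) :
    ∃ f : V → ℕ, (∀ v, f v ∈ L v) ∧
      ∀ ⦃a b⦄, G.Adj a b → nsum G f a + c a ≠ nsum G f b + c b := by
  obtain ⟨g, hgL, hg⟩ := exists_forall_nsum_add_ne hbip hG (fun v ↦ (c v : ℤ))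
    (L := fun v ↦ (L v).map Nat.castEmbedding) (by simpa using hL)
  simp only [Finset.mem_map, Nat.castEmbedding_apply] at hgL
  choose f hfL hfg using hgL
  obtain rfl : (fun v ↦ (f v : ℤ)) = g := funext hfg
  refine ⟨f, hfL, fun a b hab heq ↦ hg hab ?_⟩
  simp only [nsum, ← Nat.cast_sum] at heq ⊢
  exact_mod_cast heq

end PseudoforestLabeling

section TwoIndependent

variable {V : Type*} {G : SimpleGraph V} {I : Set V} {u v : V}

/-- A two-independent set: distinct vertices have distance at least three. This is expressed by
the lengths of walks because `SimpleGraph.dist` is `0` between different components. -/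
def IsTwoIndependent (G : SimpleGraph V) (I : Set V) : Prop :=
  ∀ u ∈ I, ∀ v ∈ I, u ≠ v → ∀ p : G.Walk u v, 3 ≤ p.length

namespace IsTwoIndependent

lemma notMem_of_adj (hI : IsTwoIndependent G I) (hu : u ∈ I) (huv : G.Adj u v) : v ∉ I := by
  intro hv
  simpa using hI u hu v hv huv.ne huv.toWalk

lemma eq_of_adj_adj (hI : IsTwoIndependent G I) {w : V} (hu : u ∈ I) (hw : w ∈ I)
    (huv : G.Adj u v) (hvw : G.Adj v w) : u = w := by
  by_contra hne
  simpa using hI u hu w hw hne (.cons huv hvw.toWalk)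

variable [Fintype V] {M : Type*} [AddCommMonoid M]

lemma nsum_indicator_of_mem (hI : IsTwoIndependent G I) (f : V → M) (hu : u ∈ I) :
    nsum G (I.indicator f) u = 0 := by
  refine Finset.sum_eq_zero fun x hx ↦ Set.indicator_of_notMem (hI.notMem_of_adj hu ?_) f
  simpa using hx

lemma nsum_indicator_of_adj (hI : IsTwoIndependent G I) (f : V → M) (hu : u ∈ I)
    (huv : G.Adj u v) : nsum G (I.indicator f) v = f u := by
  rw [nsum, Finset.sum_eq_single_of_mem u (by simpa using huv.symm), Set.indicator_of_mem hu]
  refine fun x hx hxu ↦ Set.indicator_of_notMem (fun hxI ↦ hxu ?_) f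
  exact (hI.eq_of_adj_adj hu hxI huv (by simpa using hx)).symm

lemma nsum_ne_of_modEq_indicator (hI : IsTwoIndependent G I) {f : V → ℕ} {m : ℕ} (hm : m ≠ 1)
    (hf : ∀ x, f x ≡ I.indicator 1 x [MOD m]) (hu : u ∈ I) (huv : G.Adj u v) :
    nsum G f u ≠ nsum G f v := by
  intro heq
  have hu_mod := nsum_modEq (G := G) hf u
  have hv_mod := nsum_modEq (G := G) hf v
  rw [hI.nsum_indicator_of_mem 1 hu] at hu_mod
  rw [hI.nsum_indicator_of_adj 1 hu huv, ← heq, Pi.one_apply] at hv_mod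
  have hzero_one : 0 ≡ 1 [MOD m] := hu_mod.symm.trans hv_mod
  exact hm (Nat.dvd_one.mp ((Nat.modEq_iff_dvd' zero_le_one).mp hzero_one))

end IsTwoIndependent

end TwoIndependent

theorem additive_coloring_two_independent_forest_general {V : Type*} [Fintype V]
    (G : SimpleGraph V) (F : Set V) (hI : IsTwoIndependent G Fᶜ)
    (hbip : (G.induce F).IsBipartite) (hF : IsPseudoforest (G.induce F)) :
    HasAddColoring G 4 := by
  classical
  obtain ⟨g, hg, hg_ne⟩ := exists_forall_nsum_add_ne_nat hbip hF
    (fun v ↦ nsum G (Fᶜ.indicator 1) v) (L := fun _ ↦ {2, 4}) (fun _ ↦ by decide)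
  simp only [Finset.mem_insert, Finset.mem_singleton] at hg
  let f : V → ℕ := Function.extend Subtype.val g 1
  have hf_mem (v : F) : f v = g v := Subtype.val_injective.extend_apply g 1 v
  have hf_notMem {v : V} (hv : v ∉ F) : f v = 1 :=
    Function.extend_apply' g (1 : V → ℕ) v fun ⟨x, hx⟩ ↦ hv (hx ▸ x.2)
  have hf_mod (v : V) : f v ≡ Fᶜ.indicator 1 v [MOD 2] := by
    by_cases hv : v ∈ F
    · rcases hg ⟨v, hv⟩ with h | h <;> simp [hf_mem ⟨v, hv⟩, h, hv, Nat.ModEq]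
    · simp [hf_notMem hv, hv, Nat.ModEq.refl]
  refine ⟨f, fun v ↦ ?_, fun u v huv ↦ ?_⟩
  · rw [Finset.mem_Icc]
    by_cases hv : v ∈ F
    · grind [hg ⟨v, hv⟩, hf_mem ⟨v, hv⟩]
    · simp [hf_notMem hv]
  · by_cases hu : u ∈ F
    · by_cases hv : v ∈ F
      · have hne := hg_ne (a := ⟨u, hu⟩) (b := ⟨v, hv⟩) huv
        rwa [← nsum_extend, ← nsum_extend] at hne
      · exact (hI.nsum_ne_of_modEq_indicator (by decide) hf_mod hv huv.symm).symm
    · exact hI.nsum_ne_of_modEq_indicator (by decide) hf_mod hu huv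

/-- If the vertex set of a finite simple graph `G` can be partitioned as `I ∪ F` where
`I` is two-independent (any two distinct vertices of `I` are at distance at least three,
i.e. every walk between them has length at least `3`) and the subgraph induced on `F`
is a forest, then `η(G) ≤ 4`. -/
theorem additive_coloring_two_independent_forest
    {V : Type*} [Fintype V] (G : SimpleGraph V) (I F : Set V)
    (hpart : ∀ v, v ∈ I ↔ v ∉ F)
    (hI : ∀ u ∈ I, ∀ v ∈ I, u ≠ v → ∀ p : G.Walk u v, 3 ≤ p.length)
    (hF : (G.induce F).IsAcyclic) :
    eta G ≤ 4 := by
  have hI' : IsTwoIndependent G Fᶜ := fun u hu v hv ↦ hI u ((hpart u).mpr hu) v ((hpart v).mpr hv)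
  exact Nat.sInf_le <| additive_coloring_two_independent_forest_general G F hI' hF.isBipartite
    (isPseudoforest_of_isAcyclic hF)
end
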